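/- arXiv:2605.11933 — 2 statements merged into one kernel-verified Lean document; each statement's English description precedes it below -/
import Mathlib

section
/- Let n ≥ 3 and 2 ≤ q ≤ 2n/(n−2). There exists a constant C = C(n,q) > 0 such that for every f ∈ H^1(K) one has f ∈ L^q(K) and ‖f‖_{L^q(K)} ≤ C ‖f‖_{H^1(K)}. -/
open MeasureTheory

noncomputable section

/-- The Gaussian weight `K(y) = exp(|y|²/4)`. -/
def Kw {n : ℕ} (y : EuclideanSpace ℝ (Fin n)) : ℝ := Real.exp (‖y‖ ^ 2 / 4)

/-- Membership in the weighted Sobolev space `H¹(K)`: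
`f ∈ L²(K)` and `∇f ∈ L²(K)`. -/
def MemH1K {n : ℕ} (f : EuclideanSpace ℝ (Fin n) → ℝ) : Prop :=
  Differentiable ℝ f ∧
  Integrable (fun y => (f y) ^ 2 * Kw y) ∧
  Integrable (fun y => ‖gradient f y‖ ^ 2 * Kw y)

section GNS
open scoped ENNReal NNReal
open Set Function Finset MeasureTheory Measure Filter Module

theorem gns_enorm_le {f : ℝ → ℝ} (hf : Differentiable ℝ f) (h2f : HasCompactSupport f) (b : ℝ) :
    ‖f b‖ₑ ≤ ∫⁻ y in Iic b, ‖deriv f y‖ₑ := by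
  by_cases hint : IntegrableOn (deriv f) (Iic b)
  · have h0 : Tendsto f atBot (nhds 0) := by
      rw [hasCompactSupport_iff_eventuallyEq, Filter.coclosedCompact_eq_cocompact] at h2f
      exact h2f.filter_mono _root_.atBot_le_cocompact |>.tendsto
    have h := integral_Iic_of_hasDerivAt_of_tendsto' (fun x _ => (hf x).hasDerivAt) hint h0
    rw [sub_zero] at h
    rw [← h]
    exact enorm_integral_le_lintegral_enorm _
  · have : ∫⁻ y in Iic b, ‖deriv f y‖ₑ = ∞ := by
      by_contra hne
      exact hint ⟨(measurable_deriv f).aestronglyMeasurable, lt_top_iff_ne_top.2 hne⟩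
    rw [this]; exact le_top

theorem gns_lintegral_pow_le_pow_lintegral_fderiv_aux {ι : Type*} [Fintype ι]
    {p : ℝ} (hp : Real.HolderConjugate (Fintype.card ι) p)
    {u : (ι → ℝ) → ℝ} (hu : Differentiable ℝ u)
    (h2u : HasCompactSupport u) :
    ∫⁻ x, ‖u x‖ₑ ^ p ≤ (∫⁻ x, ‖fderiv ℝ u x‖ₑ) ^ p := by
  classical
  /- For a function `f` in one variable and `t ∈ ℝ` we have
  `|f(t)| = `|∫_{-∞}^t Df(s)∂s| ≤ ∫_ℝ |Df(s)| ∂s` where we use the fundamental theorem of calculus.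
  For each `x ∈ ℝⁿ` we let `u` vary in one of the `n` coordinates and apply the inequality above.
  By taking the product over these `n` factors, raising them to the power `(n-1)⁻¹` and integrating,
  we get the inequality `∫ |u| ^ (n/(n-1)) ≤ ∫ x, ∏ i, (∫ xᵢ, |Du(update x i xᵢ)|)^(n-1)⁻¹`.
  The result then follows from the grid-lines lemma. -/
  have : (1 : ℝ) ≤ ↑(Fintype.card ι) - 1 := by
    have hι : (2 : ℝ) ≤ (Fintype.card ι) := by exact_mod_cast hp.lt
    linarith
  calc ∫⁻ x, ‖u x‖ₑ ^ p
      = ∫⁻ x, (‖u x‖ₑ ^ (1 / ((Fintype.card ι) - 1 : ℝ))) ^ ((Fintype.card ι) : ℝ) := by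
        -- a little algebraic manipulation of the exponent
        congr! 2 with x
        rw [← ENNReal.rpow_mul, hp.conjugate_eq]
        field_simp
    _ = ∫⁻ x, ∏ _i : ι, ‖u x‖ₑ ^ (1 / ((Fintype.card ι) - 1 : ℝ)) := by
        -- express the left-hand integrand as a product of identical factors
        congr! 2 with x
        simp_rw [prod_const]
        norm_cast
    _ ≤ ∫⁻ x, ∏ i, (∫⁻ xᵢ, ‖fderiv ℝ u (update x i xᵢ)‖ₑ) ^ ((1 : ℝ) / ((Fintype.card ι) - 1 : ℝ)) := ?_
    _ ≤ (∫⁻ x, ‖fderiv ℝ u x‖ₑ) ^ p := by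
        -- apply the grid-lines lemma
        apply lintegral_prod_lintegral_pow_le _ hp
        fun_prop
  -- we estimate |u x| using the fundamental theorem of calculus.
  gcongr with x i
  calc ‖u x‖ₑ
    _ ≤ ∫⁻ xᵢ in Iic (x i), ‖deriv (u ∘ update x i) xᵢ‖ₑ := by
        apply le_trans (by simp) (gns_enorm_le _ _ _)
        · exact hu.comp (by convert! (contDiff_update 1 x i).differentiable one_ne_zero)
        · exact h2u.comp_isClosedEmbedding (isClosedEmbedding_update x i)
    _ ≤ ∫⁻ xᵢ, ‖fderiv ℝ u (update x i xᵢ)‖ₑ := ?_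
  gcongr with y
  · exact Measure.restrict_le_self
  -- bound the derivative which appears
  calc ‖deriv (u ∘ update x i) y‖ₑ = ‖fderiv ℝ u (update x i y) (deriv (update x i) y)‖ₑ := by
        rw [fderiv_comp_deriv _ (hu).differentiableAt
          (hasDerivAt_update x i y).differentiableAt]
    _ ≤ ‖fderiv ℝ u (update x i y)‖ₑ * ‖deriv (update x i) y‖ₑ := ContinuousLinearMap.le_opENorm _ _
    _ ≤ ‖fderiv ℝ u (update x i y)‖ₑ := by simp [deriv_update, Pi.enorm_single]

variable {E : Type*} [NormedAddCommGroup E] [NormedSpace ℝ E] [MeasurableSpace E] [BorelSpace E]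
  [FiniteDimensional ℝ E] (μ : Measure E) [IsAddHaarMeasure μ]

theorem gns_lintegral_pow_le_pow_lintegral_fderiv {u : E → ℝ}
    (hu : Differentiable ℝ u) (h2u : HasCompactSupport u)
    {p : ℝ} (hp : Real.HolderConjugate (finrank ℝ E) p) :
    ∫⁻ x, ‖u x‖ₑ ^ p ∂μ ≤
      lintegralPowLePowLIntegralFDerivConst μ p * (∫⁻ x, ‖fderiv ℝ u x‖ₑ ∂μ) ^ p := by
  /- We reduce to the case where `E` is `ℝⁿ`, for which we have already proved the result using
  an explicit basis in `MeasureTheory.gns_lintegral_pow_le_pow_lintegral_fderiv_aux`.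
  This proof is not too hard, but takes quite some steps, reasoning about the equivalence
  `e : E ≃ ℝⁿ`, relating the measures on each sides of the equivalence,
  and estimating the derivative using the chain rule. -/
  set C := lintegralPowLePowLIntegralFDerivConst μ p
  let ι := Fin (finrank ℝ E)
  have hιcard : (Fintype.card ι) = finrank ℝ E := Fintype.card_fin (finrank ℝ E)
  have : finrank ℝ E = finrank ℝ (ι → ℝ) := by simp [hιcard]
  let e : E ≃L[ℝ] ι → ℝ := ContinuousLinearEquiv.ofFinrankEq this
  have hp : Real.HolderConjugate (Fintype.card ι) p := by rwa [hιcard]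
  have h0p : 0 ≤ p := hp.symm.nonneg
  let c := addHaarScalarFactor μ ((volume : Measure (ι → ℝ)).map e.symm)
  have hc : 0 < c := addHaarScalarFactor_pos_of_isAddHaarMeasure ..
  have h2c : μ = c • ((volume : Measure (ι → ℝ)).map e.symm) := isAddLeftInvariant_eq_smul ..
  have h3c : (c : ℝ≥0∞) ≠ 0 := by simp_rw [ne_eq, ENNReal.coe_eq_zero, hc.ne', not_false_eq_true]
  have h0C : C = (c * ‖(e.symm : (ι → ℝ) →L[ℝ] E)‖₊ ^ p) * (c ^ p)⁻¹ := by
    simp_rw [c, ι, C, e, lintegralPowLePowLIntegralFDerivConst]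
  have hC : C * c ^ p = c * ‖(e.symm : (ι → ℝ) →L[ℝ] E)‖₊ ^ p := by
    rw [h0C, inv_mul_cancel_right₀ (NNReal.rpow_pos hc).ne']
  simp only [h2c, ENNReal.smul_def, lintegral_smul_measure, smul_eq_mul]
  let v : (ι → ℝ) → ℝ := u ∘ e.symm
  have hv : Differentiable ℝ v := hu.comp e.symm.differentiable
  have h2v : HasCompactSupport v := h2u.comp_homeomorph e.symm.toHomeomorph
  have :=
  calc ∫⁻ x, ‖u x‖ₑ ^ p ∂(volume : Measure (ι → ℝ)).map e.symm
      = ∫⁻ y, ‖v y‖ₑ ^ p := by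
        refine lintegral_map ?_ e.symm.continuous.measurable
        exact hu.continuous.measurable.nnnorm.coe_nnreal_ennreal.pow_const _
    _ ≤ (∫⁻ y, ‖fderiv ℝ v y‖ₑ) ^ p := gns_lintegral_pow_le_pow_lintegral_fderiv_aux hp hv h2v
    _ = (∫⁻ y, ‖(fderiv ℝ u (e.symm y)).comp (fderiv ℝ e.symm y)‖ₑ) ^ p := by
        congr! with y
        apply fderiv_comp _ (hu _)
        exact e.symm.differentiableAt
    _ ≤ (∫⁻ y, ‖fderiv ℝ u (e.symm y)‖ₑ * ‖(e.symm : (ι → ℝ) →L[ℝ] E)‖ₑ) ^ p := by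
        gcongr with y
        rw [e.symm.fderiv]
        apply ContinuousLinearMap.opENorm_comp_le
    _ = (‖(e.symm : (ι → ℝ) →L[ℝ] E)‖ₑ * ∫⁻ y, ‖fderiv ℝ u (e.symm y)‖ₑ) ^ p := by
        rw [lintegral_mul_const, mul_comm]
        fun_prop
    _ = (‖(e.symm : (ι → ℝ) →L[ℝ] E)‖₊ ^ p : ℝ≥0) * (∫⁻ y, ‖fderiv ℝ u (e.symm y)‖ₑ) ^ p := by
        rw [ENNReal.mul_rpow_of_nonneg _ _ h0p, enorm_eq_nnnorm, ← ENNReal.coe_rpow_of_nonneg _ h0p]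
    _ = (‖(e.symm : (ι → ℝ) →L[ℝ] E)‖₊ ^ p : ℝ≥0)
        * (∫⁻ x, ‖fderiv ℝ u x‖ₑ ∂(volume : Measure (ι → ℝ)).map e.symm) ^ p := by
        congr
        rw [lintegral_map _ e.symm.continuous.measurable]
        fun_prop
  rw [← ENNReal.mul_le_mul_iff_right h3c ENNReal.coe_ne_top, ← mul_assoc, ← ENNReal.coe_mul, ← hC,
    ENNReal.coe_mul] at this
  rw [ENNReal.mul_rpow_of_nonneg _ _ h0p, ← mul_assoc, ← ENNReal.coe_rpow_of_ne_zero hc.ne']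
  exact this

theorem gns_eLpNorm_le_eLpNorm_fderiv_one {u : E → ℝ} (hu : Differentiable ℝ u) (h2u : HasCompactSupport u)
    {p : ℝ≥0} (hp : NNReal.HolderConjugate (finrank ℝ E) p) :
    eLpNorm u p μ ≤ eLpNormLESNormFDerivOneConst μ p * eLpNorm (fderiv ℝ u) 1 μ := by
  have h0p : 0 < (p : ℝ) := hp.coe.symm.pos
  rw [eLpNorm_one_eq_lintegral_enorm,
    ← ENNReal.rpow_le_rpow_iff h0p, ENNReal.mul_rpow_of_nonneg _ _ h0p.le,
    ← ENNReal.coe_rpow_of_nonneg _ h0p.le, eLpNormLESNormFDerivOneConst, ← NNReal.rpow_mul,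
    eLpNorm_nnreal_pow_eq_lintegral hp.symm.pos.ne',
    inv_mul_cancel₀ h0p.ne', NNReal.rpow_one]
  exact gns_lintegral_pow_le_pow_lintegral_fderiv μ hu h2u hp.coe

theorem gns_eLpNorm_le_eLpNorm_fderiv_of_eq_inner {u : E → ℝ}
    (hu : Differentiable ℝ u) (h2u : HasCompactSupport u)
    {p p' : ℝ≥0} (hp : 1 ≤ p) (hn : 0 < finrank ℝ E)
    (hp' : (p' : ℝ)⁻¹ = p⁻¹ - (finrank ℝ E : ℝ)⁻¹) :
    eLpNorm u p' μ ≤ eLpNormLESNormFDerivOfEqInnerConst μ p * eLpNorm (fderiv ℝ u) p μ := by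
  /- Here we derive the GNS-inequality for `p ≥ 1` from the version with `p = 1`.
  For `p > 1` we apply the previous version to the function `|u|^γ` for a suitably chosen `γ`.
  The proof requires that `x ↦ |x|^p` is smooth in the codomain, so we require that it is a
  Hilbert space. -/
  by_cases hp'0 : p' = 0
  · simp [hp'0]
  set n := finrank ℝ E
  let n' := NNReal.conjExponent n
  have h2p : (p : ℝ) < n := by
    have : 0 < p⁻¹ - (n : ℝ)⁻¹ :=
      NNReal.coe_lt_coe.mpr (pos_iff_ne_zero.mpr (inv_ne_zero hp'0)) |>.trans_eq hp'
    rwa [NNReal.coe_inv, sub_pos,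
      inv_lt_inv₀ _ (zero_lt_one.trans_le (NNReal.coe_le_coe.mpr hp))] at this
    exact_mod_cast hn
  have h0n : 2 ≤ n := Nat.succ_le_of_lt <| Nat.one_lt_cast.mp <| hp.trans_lt h2p
  have hn : NNReal.HolderConjugate n n' := .conjExponent (by norm_cast)
  have h1n : 1 ≤ (n : ℝ≥0) := hn.lt.le
  have h2n : (0 : ℝ) < n - 1 := by simp_rw [sub_pos]; exact hn.coe.lt
  have hnp : (0 : ℝ) < n - p := by simp_rw [sub_pos]; exact h2p
  rcases hp.eq_or_lt with rfl | hp
  -- the case `p = 1`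
  · convert! gns_eLpNorm_le_eLpNorm_fderiv_one μ hu h2u hn using 2
    · suffices (p' : ℝ) = n' by simpa using this
      rw [← inv_inj, hp']
      simp [field, n', NNReal.conjExponent, *]
    · norm_cast
      simp_rw [n', n, eLpNormLESNormFDerivOfEqInnerConst]
      simp only [n, NNReal.coe_one] at hnp
      field_simp
      simp
  -- the case `p > 1`
  let q := Real.conjExponent p
  have hq : Real.HolderConjugate p q := .conjExponent hp
  have h0p : p ≠ 0 := zero_lt_one.trans hp |>.ne'
  have h1p : (p : ℝ) ≠ 1 := hq.lt.ne'
  have h3p : (p : ℝ) - 1 ≠ 0 := sub_ne_zero_of_ne h1p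
  have h2q : 1 / n' - 1 / q = 1 / p' := by
    simp_rw -zeta [one_div, hp']
    rw [← hq.one_sub_inv, ← hn.coe.one_sub_inv, sub_sub_sub_cancel_left]
    simp only [NNReal.coe_natCast, NNReal.coe_inv]
  let γ : ℝ≥0 := .mk (p * (n - 1) / (n - p)) (by positivity)
  have h0γ : (γ : ℝ) = p * (n - 1) / (n - p) := rfl
  have h1γ : 1 < (γ : ℝ) := by
    rwa [h0γ, one_lt_div hnp, mul_sub, mul_one, sub_lt_sub_iff_right, lt_mul_iff_one_lt_left]
    exact hn.coe.pos
  have h2γ : γ * n' = p' := by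
    rw [← NNReal.coe_inj, ← inv_inj, hp', NNReal.coe_mul, h0γ, hn.coe.conjugate_eq]
    simp [field]
  have h3γ : (γ - 1) * q = p' := by
    rw [← inv_inj, hp', h0γ, hq.conjugate_eq]
    have : (p : ℝ) * (n - 1) - (n - p) = n * (p - 1) := by ring
    simp [field, this]
  have h4γ : (γ : ℝ) ≠ 0 := (zero_lt_one.trans h1γ).ne'
  by_cases h3u : ∫⁻ x, ‖u x‖ₑ ^ (p' : ℝ) ∂μ = 0
  · rw [eLpNorm_nnreal_eq_lintegral hp'0, h3u, ENNReal.zero_rpow_of_pos] <;> positivity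
  have h4u : ∫⁻ x, ‖u x‖ₑ ^ (p' : ℝ) ∂μ ≠ ∞ := by
    refine lintegral_rpow_enorm_lt_top_of_eLpNorm'_lt_top
      ((NNReal.coe_pos.trans pos_iff_ne_zero).mpr hp'0) ?_ |>.ne
    rw [← eLpNorm_nnreal_eq_eLpNorm' hp'0]
    exact hu.continuous.memLp_of_hasCompactSupport (μ := μ) h2u |>.eLpNorm_lt_top
  have h5u : (∫⁻ x, ‖u x‖ₑ ^ (p' : ℝ) ∂μ) ^ (1 / q) ≠ 0 :=
    ENNReal.rpow_pos (pos_iff_ne_zero.mpr h3u) h4u |>.ne'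
  have h6u : (∫⁻ x, ‖u x‖ₑ ^ (p' : ℝ) ∂μ) ^ (1 / q) ≠ ∞ := by finiteness
  have h7u := hu.continuous -- for fun_prop
  let v : E → ℝ := fun x ↦ ‖u x‖ ^ (γ : ℝ)
  have hv : Differentiable ℝ v := hu.norm_rpow h1γ
  have h2v : HasCompactSupport v := h2u.norm.rpow_const h4γ
  set C := eLpNormLESNormFDerivOneConst μ n'
  have :=
  calc (∫⁻ x, ‖u x‖ₑ ^ (p' : ℝ) ∂μ) ^ (1 / (n' : ℝ)) = eLpNorm v n' μ := by
        rw [← h2γ, eLpNorm_nnreal_eq_lintegral hn.symm.pos.ne']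
        simp (discharger := positivity) [v, Real.enorm_rpow_of_nonneg, ENNReal.rpow_mul]
    _ ≤ C * eLpNorm (fderiv ℝ v) 1 μ := gns_eLpNorm_le_eLpNorm_fderiv_one μ hv h2v hn
    _ = C * ∫⁻ x, ‖fderiv ℝ v x‖ₑ ∂μ := by rw [eLpNorm_one_eq_lintegral_enorm]
    _ ≤ C * γ * ∫⁻ x, ‖u x‖ₑ ^ ((γ : ℝ) - 1) * ‖fderiv ℝ u x‖ₑ ∂μ := by
      rw [mul_assoc, ← lintegral_const_mul γ]
      · gcongr
        simp_rw [← mul_assoc]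
        exact enorm_fderiv_norm_rpow_le (hu) h1γ
      dsimp [enorm]
      fun_prop
    _ ≤ C * γ * ((∫⁻ x, ‖u x‖ₑ ^ (p' : ℝ) ∂μ) ^ (1 / q) *
        (∫⁻ x, ‖fderiv ℝ u x‖ₑ ^ (p : ℝ) ∂μ) ^ (1 / (p : ℝ))) := by
        gcongr
        convert!
          ENNReal.lintegral_mul_le_Lp_mul_Lq μ (.symm <| .conjExponent <| show 1 < (p : ℝ) from hp)
            ?_ ?_ using 5
        · simp [γ, n, q, ← ENNReal.rpow_mul, ← h3γ]
        · fun_prop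
        · fun_prop
    _ = C * γ * (∫⁻ x, ‖fderiv ℝ u x‖ₑ ^ (p : ℝ) ∂μ) ^ (1 / (p : ℝ)) *
      (∫⁻ x, ‖u x‖ₑ ^ (p' : ℝ) ∂μ) ^ (1 / q) := by ring
  calc
    eLpNorm u p' μ
      = (∫⁻ x, ‖u x‖ₑ ^ (p' : ℝ) ∂μ) ^ (1 / (p' : ℝ)) := eLpNorm_nnreal_eq_lintegral hp'0
    _ ≤ C * γ * (∫⁻ x, ‖fderiv ℝ u x‖ₑ ^ (p : ℝ) ∂μ) ^ (1 / (p : ℝ)) := by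
      rwa [← h2q, ENNReal.rpow_sub _ _ h3u h4u, ENNReal.div_le_iff h5u h6u]
    _ = eLpNormLESNormFDerivOfEqInnerConst μ p * eLpNorm (fderiv ℝ u) (↑p) μ := by
      suffices (C : ℝ) * γ = eLpNormLESNormFDerivOfEqInnerConst μ p by
        rw [eLpNorm_nnreal_eq_lintegral h0p]
        congr
        norm_cast at this ⊢
      simp_rw [eLpNormLESNormFDerivOfEqInnerConst, γ]
      refold_let n n' C
      rw [NNReal.coe_mul, NNReal.coe_mk, Real.coe_toNNReal', mul_eq_mul_left_iff, eq_comm,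
        max_eq_left_iff]
      left
      positivity

end GNS

section Aux
open Filter Topology

variable {n : ℕ}

theorem aux_norm_gradient (f : (EuclideanSpace ℝ (Fin n)) → ℝ) (y : (EuclideanSpace ℝ (Fin n))) : ‖gradient f y‖ = ‖fderiv ℝ f y‖ := by
  simp [gradient]

theorem aux_ibp (w : (EuclideanSpace ℝ (Fin n)) → ℝ) (hw : Differentiable ℝ w) (hc : HasCompactSupport w)
    (hi : Integrable (fun y => ‖fderiv ℝ w y‖)) :
    Integrable (fun y => fderiv ℝ w y y) ∧ ∫ y, fderiv ℝ w y y = - (n * ∫ y, w y) := by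
  obtain ⟨R, hR⟩ := hc.isCompact.isBounded.exists_norm_le
  have hcont := hw.continuous
  have key : ∀ L : (EuclideanSpace ℝ (Fin n)) → ℝ, Measurable L → (∀ y, |L y| ≤ ‖y‖) → ∀ v : (EuclideanSpace ℝ (Fin n)) → (EuclideanSpace ℝ (Fin n)), Measurable v →
      (∀ y, ‖v y‖ ≤ 1) → Integrable (fun y => L y * fderiv ℝ w y (v y)) := by
    intro L hL hLb v hv hvb
    refine (hi.const_mul R).mono' ?_ ?_
    · refine (hL.mul ?_).aestronglyMeasurable
      have h1 : Measurable (fun y => ((fderiv ℝ w y, v y) : ((EuclideanSpace ℝ (Fin n)) →L[ℝ] ℝ) × (EuclideanSpace ℝ (Fin n)))) :=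
        (measurable_fderiv ℝ w).prodMk hv
      exact (isBoundedBilinearMap_apply (𝕜 := ℝ) (E := (EuclideanSpace ℝ (Fin n))) (F := ℝ)).continuous.measurable.comp h1
    · refine Eventually.of_forall fun y => ?_
      by_cases hy : y ∈ tsupport w
      · rw [norm_mul]
        have h1 := (fderiv ℝ w y).le_opNorm (v y)
        have h2 : ‖L y‖ ≤ R := (hLb y).trans (hR y hy)
        have h3 : ‖fderiv ℝ w y (v y)‖ ≤ ‖fderiv ℝ w y‖ :=
          h1.trans (mul_le_of_le_one_right (norm_nonneg _) (hvb y))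
        exact mul_le_mul h2 h3 (norm_nonneg _) ((norm_nonneg _).trans h2)
      · have : fderiv ℝ w y = 0 := by
          by_contra h
          exact hy (support_fderiv_subset ℝ (f := w) h)
        simp [this]
  have hsum : ∀ y : (EuclideanSpace ℝ (Fin n)), fderiv ℝ w y y
      = ∑ i, y i * fderiv ℝ w y (EuclideanSpace.single i 1) := by
    intro y
    have h := congrArg (fderiv ℝ w y) ((EuclideanSpace.basisFun (Fin n) ℝ).sum_repr y).symm
    rw [h]
    simp [map_sum]
  have hint : ∀ i : Fin n, Integrable (fun y : (EuclideanSpace ℝ (Fin n)) =>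
      y i * fderiv ℝ w y (EuclideanSpace.single i 1)) := fun i =>
    key (fun y => y i) (by fun_prop) (fun y => by simpa using PiLp.norm_apply_le y i)
      (fun _ => EuclideanSpace.single i 1) measurable_const (fun y => by simp)
  have hwi : Integrable w := hcont.integrable_of_hasCompactSupport hc
  have hpart : ∀ i : Fin n, ∫ y : (EuclideanSpace ℝ (Fin n)), y i * fderiv ℝ w y (EuclideanSpace.single i 1)
      = - ∫ y, w y := by
    intro i
    have hf : ∀ y : (EuclideanSpace ℝ (Fin n)), fderiv ℝ (fun y : (EuclideanSpace ℝ (Fin n)) => y i) y (EuclideanSpace.single i 1) = 1 := by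
      intro y
      have : HasFDerivAt (fun y : (EuclideanSpace ℝ (Fin n)) => y i) (EuclideanSpace.proj i : (EuclideanSpace ℝ (Fin n)) →L[ℝ] ℝ) y :=
        (EuclideanSpace.proj i : (EuclideanSpace ℝ (Fin n)) →L[ℝ] ℝ).hasFDerivAt
      rw [this.fderiv]; simp
    have := integral_mul_fderiv_eq_neg_fderiv_mul_of_integrable (μ := (volume : Measure (EuclideanSpace ℝ (Fin n))))
      (f := fun y : (EuclideanSpace ℝ (Fin n)) => y i) (g := w) (v := EuclideanSpace.single i 1)
      (by simpa [hf] using hwi) (hint i)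
      ((by fun_prop : Continuous fun y : (EuclideanSpace ℝ (Fin n)) => y i * w y).integrable_of_hasCompactSupport
        (hc.mul_left)) (fun x _ => by fun_prop) (fun x _ => hw x)
    rw [this]; simp [hf]
  simp_rw [hsum]
  refine ⟨integrable_finsetSum _ fun i _ => hint i, ?_⟩
  rw [integral_finsetSum _ fun i _ => hint i]
  simp [hpart]

/-- half weight -/
def auxE (y : (EuclideanSpace ℝ (Fin n))) : ℝ := Real.exp (‖y‖ ^ 2 / 8)

theorem auxE_sq (y : (EuclideanSpace ℝ (Fin n))) : auxE y ^ 2 = Kw y := by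
  unfold auxE Kw
  rw [← Real.exp_nat_mul]; congr 1; push_cast; ring

theorem auxE_hasFDerivAt (y : (EuclideanSpace ℝ (Fin n))) :
    HasFDerivAt (auxE : (EuclideanSpace ℝ (Fin n)) → ℝ) ((auxE y / 4) • (innerSL ℝ y)) y := by
  have h := ((hasStrictFDerivAt_norm_sq y).hasFDerivAt.const_mul (1 / 8 : ℝ)).exp
  unfold auxE
  convert! h using 1
  · ext z; congr 1; ring
  · ext z; simp; ring_nf

theorem auxE_one_le (y : (EuclideanSpace ℝ (Fin n))) : 1 ≤ auxE y := Real.one_le_exp (by positivity)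

theorem aux_grad (u : (EuclideanSpace ℝ (Fin n)) → ℝ) (hu : Differentiable ℝ u) (y : (EuclideanSpace ℝ (Fin n))) :
    gradient (fun z => u z * auxE z) y
      = auxE y • gradient u y + (u y * auxE y / 4) • y := by
  have h := (hu y).hasFDerivAt.mul (auxE_hasFDerivAt y)
  have h2 : fderiv ℝ (fun z => u z * auxE z) y = _ := h.fderiv
  unfold gradient
  rw [h2]
  apply (InnerProductSpace.toDual ℝ (EuclideanSpace ℝ (Fin n))).injective
  ext z
  simp
  ring

theorem aux_energy (u : (EuclideanSpace ℝ (Fin n)) → ℝ) (hu : Differentiable ℝ u) (hc : HasCompactSupport u)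
    (hi : Integrable (fun y => ‖gradient u y‖ ^ 2 * Kw y)) :
    ∫⁻ y, ENNReal.ofReal (‖gradient (fun z => u z * auxE z) y‖ ^ 2)
      ≤ ENNReal.ofReal (∫ y, ‖gradient u y‖ ^ 2 * Kw y) := by
  have hEd : Differentiable ℝ (auxE : (EuclideanSpace ℝ (Fin n)) → ℝ) := fun y => (auxE_hasFDerivAt y).differentiableAt
  set g : (EuclideanSpace ℝ (Fin n)) → ℝ := fun z => u z * auxE z with hg
  have hgd : Differentiable ℝ g := hu.mul hEd
  have hgc : HasCompactSupport g := hc.mul_right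
  set w : (EuclideanSpace ℝ (Fin n)) → ℝ := fun z => g z ^ 2 with hw
  have hwd : Differentiable ℝ w := hgd.pow 2
  have hwc : HasCompactSupport w := by
    have : w = fun z => g z * g z := by ext z; simp [w, pow_two]
    rw [this]; exact hgc.mul_right
  have hwf : ∀ y, fderiv ℝ w y = (2 * g y) • fderiv ℝ g y := by
    intro y
    have := ((hgd y).hasFDerivAt.pow 2).fderiv
    rw [hw, this]; simp
  have hgrad : ∀ y, gradient g y = auxE y • gradient u y + (g y / 4) • y := aux_grad u hu
  have happ : ∀ y, fderiv ℝ g y y = inner ℝ (gradient g y) y := by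
    intro y; simp [gradient]
  have hgcont := hgd.continuous
  have hwint : Integrable (fun y => ‖fderiv ℝ w y‖) := by
    refine ((((hgcont.pow 2).integrable_of_hasCompactSupport hwc).add hi).add
      ((by fun_prop : Continuous fun y : (EuclideanSpace ℝ (Fin n)) => g y ^ 2 * ‖y‖).integrable_of_hasCompactSupport
        (hwc.mul_right (f' := fun y => ‖y‖)))).mono'
      (measurable_fderiv ℝ w).norm.aestronglyMeasurable (Eventually.of_forall fun y => ?_)
    simp only [norm_norm, Pi.add_apply, Pi.pow_apply]
    rw [hwf, norm_smul, ← aux_norm_gradient g y, hgrad, ← auxE_sq]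
    have h1 := norm_add_le (auxE y • gradient u y) ((g y / 4) • y)
    rw [norm_smul, norm_smul] at h1
    have hE := auxE_one_le y
    rw [Real.norm_of_nonneg (by linarith : 0 ≤ auxE y)] at h1
    have h2 : ‖g y / 4‖ = |g y| / 4 := by simp
    have h3 : ‖2 * g y‖ = 2 * |g y| := by simp
    rw [h2] at h1
    rw [h3, ← sq_abs (g y)]
    calc _ ≤ 2 * |g y| * (auxE y * ‖gradient u y‖ + |g y| / 4 * ‖y‖) := by gcongr
      _ ≤ _ := by
        have : 0 ≤ |g y| ^ 2 * ‖y‖ := by positivity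
        nlinarith [sq_nonneg (|g y| - auxE y * ‖gradient u y‖)]
  obtain ⟨hA, hB⟩ := aux_ibp w hwd hwc hwint
  have hpt : ∀ y, ‖gradient g y‖ ^ 2 ≤ ‖gradient u y‖ ^ 2 * Kw y + (1 / 4) * fderiv ℝ w y y := by
    intro y
    have h1 : auxE y • gradient u y = gradient g y - (g y / 4) • y := by rw [hgrad]; abel
    have h2 : ‖gradient u y‖ ^ 2 * Kw y = ‖auxE y • gradient u y‖ ^ 2 := by
      rw [norm_smul, mul_pow, ← auxE_sq, Real.norm_eq_abs, sq_abs]; ring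
    rw [h2, h1, norm_sub_sq_real, hwf, smul_apply, happ, inner_smul_right,
      norm_smul, smul_eq_mul]
    nlinarith [sq_nonneg (‖g y / 4‖ * ‖y‖)]
  have hint := hi.add (hA.const_mul (1 / 4))
  have h0 : ∀ y, 0 ≤ ‖gradient u y‖ ^ 2 * Kw y + (1 / 4) * fderiv ℝ w y y := fun y =>
    (sq_nonneg _).trans (hpt y)
  calc _ ≤ ∫⁻ y, ENNReal.ofReal (‖gradient u y‖ ^ 2 * Kw y + (1 / 4) * fderiv ℝ w y y) :=
        lintegral_mono fun y => ENNReal.ofReal_le_ofReal (hpt y)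
    _ = ENNReal.ofReal (∫ y, (‖gradient u y‖ ^ 2 * Kw y + (1 / 4) * fderiv ℝ w y y)) :=
        (ofReal_integral_eq_lintegral_ofReal hint (Eventually.of_forall h0)).symm
    _ ≤ _ := by
        apply ENNReal.ofReal_le_ofReal
        rw [integral_add hi (hA.const_mul _), integral_const_mul, hB]
        have : 0 ≤ ∫ y, w y := integral_nonneg fun y => sq_nonneg _
        have : 0 ≤ (n : ℝ) * ∫ y, w y := by positivity
        linarith


theorem aux_compact (hn : 3 ≤ n) (q : ℝ) (hq2 : 2 ≤ q)
    (hq : q ≤ 2 * (n : ℝ) / ((n : ℝ) - 2)) :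
    ∃ C : ℝ, 0 < C ∧ ∀ u : (EuclideanSpace ℝ (Fin n)) → ℝ, Differentiable ℝ u → HasCompactSupport u →
      Integrable (fun y => (u y) ^ 2 * Kw y) →
      Integrable (fun y => ‖gradient u y‖ ^ 2 * Kw y) → ∀ N : ℝ, 0 < N →
      ∫ y, (u y) ^ 2 * Kw y ≤ N ^ 2 → ∫ y, ‖gradient u y‖ ^ 2 * Kw y ≤ N ^ 2 →
      ∫⁻ y, ENNReal.ofReal (|u y| ^ q * Kw y) ≤ ENNReal.ofReal (C * N ^ q) := by
  have hn' : (3 : ℝ) ≤ n := by exact_mod_cast hn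
  set p : ℝ := 2 * (n : ℝ) / ((n : ℝ) - 2) with hp
  have hp2 : 2 ≤ p := hq2.trans hq
  have hp0 : 0 ≤ p := by linarith
  have hppos : 0 < p := by linarith
  set p' : NNReal := ⟨p, hp0⟩ with hp'
  have hp'c : (p' : ℝ) = p := rfl
  set A : NNReal := eLpNormLESNormFDerivOfEqInnerConst (volume : Measure (EuclideanSpace ℝ (Fin n))) ((2 : NNReal) : ℝ)
  refine ⟨1 + (A : ℝ) ^ p, by positivity, ?_⟩
  intro u hu hc hi0 hi1 N hN hN0 hN1
  have hEd : Differentiable ℝ (auxE : (EuclideanSpace ℝ (Fin n)) → ℝ) := fun y => (auxE_hasFDerivAt y).differentiableAt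
  have hen := aux_energy u hu hc hi1
  set g : (EuclideanSpace ℝ (Fin n)) → ℝ := fun z => u z * auxE z with hg
  have hgd : Differentiable ℝ g := hu.mul hEd
  have hgc : HasCompactSupport g := hc.mul_right
  have hgcont := hgd.continuous
  -- Sobolev
  have hsob := gns_eLpNorm_le_eLpNorm_fderiv_of_eq_inner (volume : Measure (EuclideanSpace ℝ (Fin n))) hgd hgc
    (p := 2) (p' := p') (by norm_num) (by simp; omega) (by
      rw [hp'c, finrank_euclideanSpace, Fintype.card_fin, hp]
      have : (n : ℝ) - 2 ≠ 0 := by linarith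
      have : (n : ℝ) ≠ 0 := by linarith
      push_cast
      field_simp)
  have hp'0 : p' ≠ 0 := by
    intro h; rw [h] at hp'c; simp at hp'c; linarith
  have hE2 : eLpNorm (fderiv ℝ g) (2 : NNReal) volume ≤ ENNReal.ofReal N := by
    rw [eLpNorm_nnreal_eq_lintegral (by norm_num)]
    have h1 : ∫⁻ y, ‖fderiv ℝ g y‖ₑ ^ ((2 : NNReal) : ℝ) ≤ ENNReal.ofReal (N ^ 2) := by
      refine le_trans (le_of_eq ?_) (hen.trans (ENNReal.ofReal_le_ofReal hN1))
      refine lintegral_congr fun y => ?_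
      rw [aux_norm_gradient, ENNReal.ofReal_pow (norm_nonneg _), ofReal_norm]
      simp
    calc _ ≤ (ENNReal.ofReal (N ^ 2)) ^ (1 / ((2 : NNReal) : ℝ)) := by gcongr
      _ = _ := by
        rw [ENNReal.ofReal_rpow_of_nonneg (by positivity) (by positivity)]
        congr 1
        rw [← Real.rpow_natCast, ← Real.rpow_mul hN.le]
        simp
  have hLp : ∫⁻ y, ‖g y‖ₑ ^ p ≤ ENNReal.ofReal ((A * N) ^ p) := by
    have h1 : eLpNorm g p' volume ≤ ENNReal.ofReal (A * N) := by
      refine hsob.trans ?_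
      rw [ENNReal.ofReal_mul (by positivity), ENNReal.ofReal_coe_nnreal]
      gcongr
    have h2 := eLpNorm_nnreal_pow_eq_lintegral (f := g) (μ := (volume : Measure (EuclideanSpace ℝ (Fin n)))) hp'0
    have h3 : (p' : ℝ) = p := rfl
    rw [h3] at h2
    rw [← h2, ← ENNReal.ofReal_rpow_of_nonneg (by positivity) hp0]
    gcongr
  have hL2 : ∫⁻ y, ENNReal.ofReal (g y ^ 2) ≤ ENNReal.ofReal (N ^ 2) := by
    have : ∀ y, g y ^ 2 = u y ^ 2 * Kw y := fun y => by rw [← auxE_sq]; simp [g]; ring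
    simp_rw [this]
    rw [← ofReal_integral_eq_lintegral_ofReal hi0
      (Eventually.of_forall fun y => mul_nonneg (sq_nonneg _) (Real.exp_pos _).le)]
    exact ENNReal.ofReal_le_ofReal hN0
  have hpt : ∀ y, |u y| ^ q * Kw y ≤ N ^ (q - 2) * g y ^ 2 + N ^ (q - p) * |g y| ^ p := by
    intro y
    have hE := auxE_one_le y
    have hE0 : 0 ≤ auxE y := by linarith
    have h1 : |u y| ^ q * Kw y ≤ |g y| ^ q := by
      simp only [g]
      rw [abs_mul, abs_of_nonneg hE0, Real.mul_rpow (abs_nonneg _) hE0, ← auxE_sq,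
        ← Real.rpow_natCast (auxE y)]
      gcongr
      exact_mod_cast hq2
    refine h1.trans ?_
    have ht : (|g y| / N) ^ q ≤ (|g y| / N) ^ (2 : ℝ) + (|g y| / N) ^ p := by
      have h0 : 0 ≤ |g y| / N := by positivity
      rcases le_total (|g y| / N) 1 with h | h
      · have := Real.rpow_le_rpow_of_exponent_ge_of_imp h0 h hq2 (by intro _ h; linarith)
        have := Real.rpow_nonneg h0 p
        linarith
      · have := Real.rpow_le_rpow_of_exponent_le h hq
        have := Real.rpow_nonneg h0 2
        linarith
    rw [Real.div_rpow (abs_nonneg _) hN.le, Real.div_rpow (abs_nonneg _) hN.le,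
      Real.div_rpow (abs_nonneg _) hN.le, div_le_iff₀ (by positivity)] at ht
    refine ht.trans (le_of_eq ?_)
    rw [Real.rpow_sub hN, Real.rpow_sub hN]
    have : |g y| ^ (2 : ℝ) = g y ^ 2 := by rw [Real.rpow_two, sq_abs]
    rw [this]
    ring
  calc _ ≤ ∫⁻ y, (ENNReal.ofReal (N ^ (q - 2)) * ENNReal.ofReal (g y ^ 2)
          + ENNReal.ofReal (N ^ (q - p)) * ‖g y‖ₑ ^ p) := by
        refine lintegral_mono fun y => (ENNReal.ofReal_le_ofReal (hpt y)).trans (le_of_eq ?_)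
        rw [ENNReal.ofReal_add (by positivity) (by positivity), ENNReal.ofReal_mul (by positivity),
          ENNReal.ofReal_mul (by positivity), ← ENNReal.ofReal_rpow_of_nonneg (abs_nonneg _) hp0,
          ← Real.norm_eq_abs, ofReal_norm]
    _ = ENNReal.ofReal (N ^ (q - 2)) * (∫⁻ y, ENNReal.ofReal (g y ^ 2))
          + ENNReal.ofReal (N ^ (q - p)) * ∫⁻ y, ‖g y‖ₑ ^ p := by
        rw [lintegral_add_left (by fun_prop), lintegral_const_mul _ (by fun_prop),
          lintegral_const_mul _ (by fun_prop)]
    _ ≤ ENNReal.ofReal (N ^ (q - 2)) * ENNReal.ofReal (N ^ 2)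
          + ENNReal.ofReal (N ^ (q - p)) * ENNReal.ofReal ((A * N) ^ p) := by gcongr
    _ = _ := by
        rw [← ENNReal.ofReal_mul (by positivity), ← ENNReal.ofReal_mul (by positivity),
          ← ENNReal.ofReal_add (by positivity) (by positivity)]
        congr 1
        rw [Real.mul_rpow (by positivity) hN.le, Real.rpow_sub hN, Real.rpow_sub hN, Real.rpow_two]
        have : N ^ p ≠ 0 := by positivity
        field_simp

theorem aux_cutoff : ∃ M : ℝ, 0 < M ∧ ∀ f : (EuclideanSpace ℝ (Fin n)) → ℝ, MemH1K f → ∀ k : ℕ,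
    ∃ u : (EuclideanSpace ℝ (Fin n)) → ℝ, Differentiable ℝ u ∧ HasCompactSupport u ∧
      (∀ y, |u y| ≤ |f y|) ∧ (∀ y, ‖gradient u y‖ ≤ ‖gradient f y‖ + M * |f y|) ∧
      (∀ y, ‖y‖ ≤ k + 1 → u y = f y) := by
  let χ : ContDiffBump (0 : (EuclideanSpace ℝ (Fin n))) := ⟨1, 2, by norm_num, by norm_num⟩
  have hχd : ContDiff ℝ 1 χ := χ.contDiff
  have hχc : HasCompactSupport χ := χ.hasCompactSupport
  obtain ⟨M, hM⟩ := (hχd.continuous_fderiv one_ne_zero).bounded_above_of_compact_support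
    (hχc.fderiv ℝ)
  refine ⟨|M| + 1, by positivity, ?_⟩
  intro f hf k
  have hk : (0 : ℝ) < (k : ℝ) + 1 := by positivity
  set r : ℝ := ((k : ℝ) + 1)⁻¹ with hr
  have hr0 : 0 < r := by positivity
  have hr1 : r ≤ 1 := inv_le_one_of_one_le₀ (by linarith [(Nat.cast_nonneg k : (0 : ℝ) ≤ k)])
  set c : (EuclideanSpace ℝ (Fin n)) → ℝ := fun y => χ (r • y) with hcdef
  have hder : ∀ y, HasFDerivAt c ((fderiv ℝ χ (r • y)).comp (r • ContinuousLinearMap.id ℝ (EuclideanSpace ℝ (Fin n)))) y := by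
    intro y
    exact ((hχd.differentiable one_ne_zero) (r • y)).hasFDerivAt.comp y
      ((hasFDerivAt_id y).const_smul r)
  have hcd : Differentiable ℝ c := fun y => (hder y).differentiableAt
  have hcn : ∀ y, ‖fderiv ℝ c y‖ ≤ |M| + 1 := by
    intro y
    rw [(hder y).fderiv]
    have h1 : ‖r • ContinuousLinearMap.id ℝ (EuclideanSpace ℝ (Fin n))‖ ≤ 1 := by
      rw [norm_smul, Real.norm_of_nonneg hr0.le]
      exact mul_le_one₀ hr1 (norm_nonneg _) ContinuousLinearMap.norm_id_le
    calc _ ≤ ‖fderiv ℝ χ (r • y)‖ * ‖r • ContinuousLinearMap.id ℝ (EuclideanSpace ℝ (Fin n))‖ :=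
          ContinuousLinearMap.opNorm_comp_le _ _
      _ ≤ ‖fderiv ℝ χ (r • y)‖ := mul_le_of_le_one_right (norm_nonneg _) h1
      _ ≤ M := hM _
      _ ≤ _ := by linarith [le_abs_self M]
  have hc01 : ∀ y, |c y| ≤ 1 := fun y => by
    rw [abs_of_nonneg χ.nonneg]; exact χ.le_one
  refine ⟨fun y => c y * f y, hcd.mul hf.1, ?_, ?_, ?_, ?_⟩
  · exact HasCompactSupport.mul_right (hχc.comp_smul hr0.ne')
  · intro y
    rw [abs_mul]; exact mul_le_of_le_one_left (abs_nonneg _) (hc01 y)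
  · intro y
    rw [aux_norm_gradient, aux_norm_gradient]
    have h := ((hcd y).hasFDerivAt.mul (hf.1 y).hasFDerivAt).fderiv
    have h' : fderiv ℝ (fun y => c y * f y) y = c y • fderiv ℝ f y + f y • fderiv ℝ c y := h
    rw [h']
    refine (norm_add_le _ _).trans ?_
    rw [norm_smul, norm_smul, Real.norm_eq_abs, Real.norm_eq_abs]
    have h1 := mul_le_of_le_one_left (norm_nonneg (fderiv ℝ f y)) (hc01 y)
    have h2 := mul_le_mul_of_nonneg_left (hcn y) (abs_nonneg (f y))
    linarith
  · intro y hy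
    have : c y = 1 := by
      apply χ.one_of_mem_closedBall
      rw [mem_closedBall_zero_iff, norm_smul, Real.norm_of_nonneg hr0.le]
      change r * ‖y‖ ≤ 1
      rw [hr, inv_mul_le_iff₀ hk]; linarith
    simp [this]

end Aux

/-- weighted Sobolev embedding `H¹(K) ↪ L^q(K)`:
for `n ≥ 3` and `2 ≤ q ≤ 2n/(n−2)` there is `C = C(n,q) > 0` such that every
`f ∈ H¹(K)` lies in `L^q(K)` with `‖f‖_{L^q(K)} ≤ C ‖f‖_{H¹(K)}`. -/
theorem stmt1 (n : ℕ) (hn : 3 ≤ n) (q : ℝ) (hq2 : 2 ≤ q)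
    (hq : q ≤ 2 * (n : ℝ) / ((n : ℝ) - 2)) :
    ∃ C : ℝ, 0 < C ∧ ∀ f : EuclideanSpace ℝ (Fin n) → ℝ, MemH1K f →
      Integrable (fun y => |f y| ^ q * Kw y) ∧
      (∫ y, |f y| ^ q * Kw y) ^ (1 / q) ≤
        C * Real.sqrt (∫ y, (‖gradient f y‖ ^ 2 + (f y) ^ 2) * Kw y) := by
  obtain ⟨C, hC, hcomp⟩ := aux_compact hn q hq2 hq
  obtain ⟨M, hM, hcut⟩ := aux_cutoff (n := n)
  have hq0 : 0 < q := by linarith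
  set D : ℝ := 2 * M ^ 2 + 2 with hD
  refine ⟨C ^ (1 / q) * Real.sqrt D, by positivity, ?_⟩
  intro f hf
  obtain ⟨hfd, hf0, hf1⟩ := id hf
  have hKpos : ∀ y : EuclideanSpace ℝ (Fin n), 0 < Kw y := fun y => Real.exp_pos _
  have hKc : Continuous (Kw : EuclideanSpace ℝ (Fin n) → ℝ) := by unfold Kw; fun_prop
  have hgm : ∀ u : EuclideanSpace ℝ (Fin n) → ℝ, Measurable fun y => ‖gradient u y‖ := by
    intro u; simp_rw [aux_norm_gradient]; exact (measurable_fderiv ℝ u).norm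
  have hfc := hfd.continuous
  have hSint : Integrable (fun y => (‖gradient f y‖ ^ 2 + (f y) ^ 2) * Kw y) := by
    simp_rw [add_mul]; exact hf1.add hf0
  set S : ℝ := ∫ y, (‖gradient f y‖ ^ 2 + (f y) ^ 2) * Kw y with hS
  have hS0 : 0 ≤ S := integral_nonneg fun y => mul_nonneg (by positivity) (hKpos y).le
  have main : ∀ N : ℝ, Real.sqrt (D * S) < N →
      ∫⁻ y, ENNReal.ofReal (|f y| ^ q * Kw y) ≤ ENNReal.ofReal (C * N ^ q) := by
    intro N hN
    have hNpos : 0 < N := (Real.sqrt_nonneg _).trans_lt hN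
    have hDS : D * S ≤ N ^ 2 := by
      rw [← Real.sqrt_le_left hNpos.le]; exact hN.le
    choose u hud huc hu1 hu2 hu3 using hcut f hf
    have hbound : ∀ k, ∫⁻ y, ENNReal.ofReal (|u k y| ^ q * Kw y) ≤ ENNReal.ofReal (C * N ^ q) := by
      intro k
      have huk := (hud k).continuous
      have hp0 : ∀ y, (u k y) ^ 2 * Kw y ≤ D * ((‖gradient f y‖ ^ 2 + (f y) ^ 2) * Kw y) := by
        intro y
        have h1 : (u k y) ^ 2 ≤ (f y) ^ 2 := sq_le_sq.2 (hu1 k y)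
        have h2 : (u k y) ^ 2 ≤ D * (‖gradient f y‖ ^ 2 + (f y) ^ 2) := by
          rw [hD]
          nlinarith [sq_nonneg (f y), mul_nonneg (sq_nonneg M) (sq_nonneg (f y)),
            mul_nonneg (sq_nonneg M) (sq_nonneg ‖gradient f y‖), sq_nonneg ‖gradient f y‖]
        have := mul_le_mul_of_nonneg_right h2 (hKpos y).le
        linarith
      have hp1 : ∀ y, ‖gradient (u k) y‖ ^ 2 * Kw y
          ≤ D * ((‖gradient f y‖ ^ 2 + (f y) ^ 2) * Kw y) := by
        intro y
        have h1 : ‖gradient (u k) y‖ ^ 2 ≤ (‖gradient f y‖ + M * |f y|) ^ 2 :=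
          pow_le_pow_left₀ (norm_nonneg _) (hu2 k y) 2
        have h2 : ‖gradient (u k) y‖ ^ 2 ≤ D * (‖gradient f y‖ ^ 2 + (f y) ^ 2) := by
          rw [hD, ← sq_abs (f y)]
          nlinarith [sq_nonneg (‖gradient f y‖ - M * |f y|), sq_nonneg (|f y|),
            mul_nonneg (sq_nonneg M) (sq_nonneg ‖gradient f y‖)]
        have := mul_le_mul_of_nonneg_right h2 (hKpos y).le
        linarith
      have hi0 : Integrable (fun y => (u k y) ^ 2 * Kw y) := by
        refine (hSint.const_mul D).mono' (by fun_prop) (Filter.Eventually.of_forall fun y => ?_)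
        rw [Real.norm_of_nonneg (mul_nonneg (sq_nonneg _) (hKpos y).le)]
        exact hp0 y
      have hi1 : Integrable (fun y => ‖gradient (u k) y‖ ^ 2 * Kw y) := by
        refine (hSint.const_mul D).mono'
          (((hgm (u k)).pow_const 2).mul hKc.measurable).aestronglyMeasurable
          (Filter.Eventually.of_forall fun y => ?_)
        rw [Real.norm_of_nonneg (mul_nonneg (sq_nonneg _) (hKpos y).le)]
        exact hp1 y
      refine hcomp (u k) (hud k) (huc k) hi0 hi1 N hNpos ?_ ?_
      · refine le_trans ?_ hDS
        rw [hS, ← integral_const_mul]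
        exact integral_mono hi0 (hSint.const_mul D) hp0
      · refine le_trans ?_ hDS
        rw [hS, ← integral_const_mul]
        exact integral_mono hi1 (hSint.const_mul D) hp1
    have hlim : ∀ y, Filter.liminf (fun k => ENNReal.ofReal (|u k y| ^ q * Kw y)) Filter.atTop
        = ENNReal.ofReal (|f y| ^ q * Kw y) := by
      intro y
      apply Filter.Tendsto.liminf_eq
      refine tendsto_const_nhds.congr' ?_
      filter_upwards [Filter.eventually_ge_atTop ⌈‖y‖⌉₊] with k hk
      rw [hu3 k y]
      have h1 := Nat.le_ceil ‖y‖
      have h2 : ((⌈‖y‖⌉₊ : ℕ) : ℝ) ≤ k := by exact_mod_cast hk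
      linarith
    calc _ = ∫⁻ y, Filter.liminf (fun k => ENNReal.ofReal (|u k y| ^ q * Kw y)) Filter.atTop := by
          simp_rw [hlim]
      _ ≤ Filter.liminf (fun k => ∫⁻ y, ENNReal.ofReal (|u k y| ^ q * Kw y)) Filter.atTop := by
          refine lintegral_liminf_le fun k => ?_
          have := (hud k).continuous
          fun_prop
      _ ≤ Filter.liminf (fun _ : ℕ => ENNReal.ofReal (C * N ^ q)) Filter.atTop :=
          Filter.liminf_le_liminf (Filter.Eventually.of_forall hbound)
      _ = _ := Filter.liminf_const _
  have hnn : ∀ y, 0 ≤ |f y| ^ q * Kw y := fun y =>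
    mul_nonneg (Real.rpow_nonneg (abs_nonneg _) _) (hKpos y).le
  have hmeas : AEStronglyMeasurable (fun y => |f y| ^ q * Kw y) volume := by
    have : Measurable (fun y => |f y| ^ q * Kw y) := by fun_prop
    exact this.aestronglyMeasurable
  have hint : Integrable (fun y => |f y| ^ q * Kw y) := by
    refine ⟨hmeas, ?_⟩
    rw [hasFiniteIntegral_iff_ofReal (Filter.Eventually.of_forall hnn)]
    exact (main (Real.sqrt (D * S) + 1) (by linarith)).trans_lt ENNReal.ofReal_lt_top
  refine ⟨hint, ?_⟩
  rw [mul_assoc, ← Real.sqrt_mul (by positivity)]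
  have hI0 : 0 ≤ ∫ y, |f y| ^ q * Kw y := integral_nonneg hnn
  have hbd : ∀ N : ℝ, Real.sqrt (D * S) < N →
      (∫ y, |f y| ^ q * Kw y) ^ (1 / q) ≤ C ^ (1 / q) * N := by
    intro N hN
    have hNpos : 0 < N := (Real.sqrt_nonneg _).trans_lt hN
    have h1 := main N hN
    rw [← ofReal_integral_eq_lintegral_ofReal hint (Filter.Eventually.of_forall hnn),
      ENNReal.ofReal_le_ofReal_iff (by positivity)] at h1
    calc _ ≤ (C * N ^ q) ^ (1 / q) := Real.rpow_le_rpow hI0 h1 (by positivity)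
      _ = _ := by
        rw [Real.mul_rpow hC.le (by positivity), ← Real.rpow_mul hNpos.le,
          mul_one_div_cancel hq0.ne', Real.rpow_one]
  have hCq : 0 < C ^ (1 / q) := by positivity
  rw [← div_le_iff₀' hCq]
  refine le_of_forall_gt_imp_ge_of_dense fun N hN => ?_
  rw [div_le_iff₀' hCq]
  exact hbd N hN

end
end

section
/- Let n ≥ 3. For every u ∈ H^1(K) one has the weighted Poincaré inequality (n/2) ∫_{ℝⁿ} |u(y)|² K(y) dy ≤ ∫_{ℝⁿ} |∇u(y)|² K(y) dy. -/
open MeasureTheory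

noncomputable section

/-- The integral of a directional derivative vanishes. -/
lemma integral_dir_zero {n : ℕ} {f f' : EuclideanSpace ℝ (Fin n) → ℝ}
    {v : EuclideanSpace ℝ (Fin n)} (hf : Integrable f) (hf' : Integrable f')
    (h : ∀ x, HasLineDerivAt ℝ f (f' x) x v) : ∫ x, f' x = 0 := by
  have := integral_bilinear_hasLineDerivAt_right_eq_neg_left_of_integrable
    (μ := volume) (f := f) (f' := f') (g := fun _ => (1 : ℝ)) (g' := fun _ => (0 : ℝ)) (v := v)
    (B := ContinuousLinearMap.mul ℝ ℝ) (by simpa using hf') (by simp) (by simpa using hf)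
    (fun x _ => h x) (fun x _ => by
      have := (hasFDerivAt_const (𝕜 := ℝ) (1 : ℝ) x).hasLineDerivAt v
      simpa using this)
  simpa using this

/-- One-directional inequality with a slightly weaker weight. -/
lemma dir_ineq {n : ℕ} (u D : EuclideanSpace ℝ (Fin n) → ℝ) (v : EuclideanSpace ℝ (Fin n))
    (hv : ‖v‖ = 1) (hD : ∀ x, D x = fderiv ℝ u x v) (hu : Differentiable ℝ u)
    (h0 : Integrable (fun y => (u y) ^ 2 * Kw y)) (h1 : Integrable (fun y => (D y) ^ 2 * Kw y))
    (a : ℝ) (ha : a < 1 / 4) (ha0 : 0 < a) :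
    (2 * a) * ∫ y, (u y) ^ 2 * Real.exp (a * ‖y‖ ^ 2) ≤ ∫ y, (D y) ^ 2 * Kw y := by
  set G : EuclideanSpace ℝ (Fin n) → ℝ := fun y => Real.exp (a * ‖y‖ ^ 2) with hG
  set l : EuclideanSpace ℝ (Fin n) → ℝ := fun y => inner ℝ v y with hl
  have hGc : Continuous G := by rw [hG]; fun_prop
  have hlc : Continuous l := by rw [hl]; fun_prop
  have huc : Continuous u := hu.continuous
  have hDm : Measurable D := by
    have : D = fun x => fderiv ℝ u x v := funext hD
    rw [this]; exact measurable_fderiv_apply_const ℝ u v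
  have hGp : ∀ y, 0 < G y := fun y => Real.exp_pos _
  have hGK : ∀ y, G y ≤ Kw y := fun y => by
    apply Real.exp_le_exp.2; nlinarith [sq_nonneg ‖y‖]
  have hlK : ∀ y, (l y) ^ 2 * G y ≤ (1 / (1 / 4 - a)) * Kw y := fun y => by
    have hc : 0 < 1 / 4 - a := by linarith
    have e1 : (l y) ^ 2 ≤ ‖y‖ ^ 2 := by
      have := abs_real_inner_le_norm v y
      rw [hv, one_mul] at this
      rw [← sq_abs]; gcongr
    have e2 : (1 / 4 - a) * ‖y‖ ^ 2 ≤ Real.exp ((1 / 4 - a) * ‖y‖ ^ 2) := by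
      linarith [Real.add_one_le_exp ((1 / 4 - a) * ‖y‖ ^ 2)]
    have e3 : Kw y = Real.exp ((1 / 4 - a) * ‖y‖ ^ 2) * G y := by
      simp only [Kw, hG]; rw [← Real.exp_add]; congr 1; ring
    rw [e3, one_div, inv_mul_eq_div, le_div_iff₀ hc]
    have := hGp y
    calc (l y) ^ 2 * G y * (1 / 4 - a) = ((1 / 4 - a) * (l y) ^ 2) * G y := by ring
      _ ≤ ((1 / 4 - a) * ‖y‖ ^ 2) * G y := by gcongr
      _ ≤ _ := by gcongr
  have i0 : Integrable (fun y => (u y) ^ 2 * G y) := by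
    refine h0.mono' (by fun_prop) (.of_forall fun y => ?_)
    rw [Real.norm_of_nonneg (mul_nonneg (sq_nonneg _) (hGp y).le)]
    exact mul_le_mul_of_nonneg_left (hGK y) (sq_nonneg _)
  have i1 : Integrable (fun y => (D y) ^ 2 * G y) := by
    refine h1.mono' (by fun_prop) (.of_forall fun y => ?_)
    rw [Real.norm_of_nonneg (mul_nonneg (sq_nonneg _) (hGp y).le)]
    exact mul_le_mul_of_nonneg_left (hGK y) (sq_nonneg _)
  have i2 : Integrable (fun y => (u y) ^ 2 * ((l y) ^ 2 * G y)) := by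
    refine (h0.const_mul (1 / (1 / 4 - a))).mono' (by fun_prop) (.of_forall fun y => ?_)
    rw [Real.norm_of_nonneg (mul_nonneg (sq_nonneg _) (mul_nonneg (sq_nonneg _) (hGp y).le))]
    have := mul_le_mul_of_nonneg_left (hlK y) (sq_nonneg (u y))
    linarith
  have i3 : Integrable (fun y => u y * D y * l y * G y) := by
    refine (i1.add i2).mono' (by fun_prop) (.of_forall fun y => ?_)
    rw [norm_mul, Real.norm_of_nonneg (hGp y).le, Real.norm_eq_abs]
    have : |u y * D y * l y| ≤ D y ^ 2 + u y ^ 2 * l y ^ 2 := by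
      rw [abs_le]
      constructor <;>
        nlinarith [sq_nonneg (D y + u y * l y), sq_nonneg (D y - u y * l y), sq_nonneg (D y),
          sq_nonneg (u y * l y)]
    have := mul_le_mul_of_nonneg_right this (hGp y).le
    simp only [Pi.add_apply]
    linarith
  have i4 : Integrable (fun y => (u y) ^ 2 * l y * G y) := by
    refine (i0.add i2).mono' (by fun_prop) (.of_forall fun y => ?_)
    rw [norm_mul, Real.norm_of_nonneg (hGp y).le, Real.norm_eq_abs, abs_mul,
      abs_of_nonneg (sq_nonneg (u y))]
    have : |l y| ≤ 1 + l y ^ 2 := by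
      rw [abs_le]
      constructor <;> nlinarith [sq_nonneg (l y + 1), sq_nonneg (l y - 1)]
    have := mul_le_mul_of_nonneg_right
      (mul_le_mul_of_nonneg_left this (sq_nonneg (u y))) (hGp y).le
    simp only [Pi.add_apply]
    linarith
  have hz : ∫ y, (2 * (u y * D y * l y * G y) + (u y) ^ 2 * G y
      + 2 * a * ((u y) ^ 2 * ((l y) ^ 2 * G y))) = 0 := by
    refine integral_dir_zero (v := v) i4
      (((i3.const_mul 2).add i0).add (i2.const_mul (2 * a))) fun x => ?_
    have d1 : HasFDerivAt l (innerSL ℝ v) x := (innerSL ℝ v).hasFDerivAt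
    have d2 : HasFDerivAt G _ x :=
      (((hasStrictFDerivAt_norm_sq x).hasFDerivAt).const_mul a).exp
    have d3 := (((hu x).hasFDerivAt.pow 2).mul d1).mul d2
    have d4 : HasLineDerivAt ℝ (fun y => (u y) ^ 2 * l y * G y) _ x v := d3.hasLineDerivAt v
    convert d4 using 1
    simp [hD, hl, hG, real_inner_self_eq_norm_sq, hv, real_inner_comm x v]
    ring
  have hs : 0 ≤ ∫ y, (D y + 2 * a * l y * u y) ^ 2 * G y :=
    integral_nonneg fun y => mul_nonneg (sq_nonneg _) (hGp y).le
  have he : ∫ y, (D y + 2 * a * l y * u y) ^ 2 * G y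
      = (∫ y, (D y) ^ 2 * G y) + 2 * a * (∫ y, (2 * (u y * D y * l y * G y) + (u y) ^ 2 * G y
      + 2 * a * ((u y) ^ 2 * ((l y) ^ 2 * G y)))) - 2 * a * ∫ y, (u y) ^ 2 * G y := by
    have i5 : Integrable (fun y => 2 * (u y * D y * l y * G y) + (u y) ^ 2 * G y
      + 2 * a * ((u y) ^ 2 * ((l y) ^ 2 * G y))) :=
      (((i3.const_mul 2).add i0).add (i2.const_mul (2 * a)))
    rw [← integral_const_mul, ← integral_const_mul, ← integral_add i1 (i5.const_mul _),
      ← integral_sub (by exact i1.add (i5.const_mul _)) (i0.const_mul _)]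
    congr 1; ext y; ring
  have hm : ∫ y, (D y) ^ 2 * G y ≤ ∫ y, (D y) ^ 2 * Kw y :=
    integral_mono i1 h1 fun y => mul_le_mul_of_nonneg_left (hGK y) (sq_nonneg _)
  rw [he, hz] at hs
  linarith

lemma dir_ineq_lim {n : ℕ} (u D : EuclideanSpace ℝ (Fin n) → ℝ) (v : EuclideanSpace ℝ (Fin n))
    (hv : ‖v‖ = 1) (hD : ∀ x, D x = fderiv ℝ u x v) (hu : Differentiable ℝ u)
    (h0 : Integrable (fun y => (u y) ^ 2 * Kw y)) (h1 : Integrable (fun y => (D y) ^ 2 * Kw y)) :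
    (1 / 2) * ∫ y, (u y) ^ 2 * Kw y ≤ ∫ y, (D y) ^ 2 * Kw y := by
  have huc : Continuous u := hu.continuous
  have ht : Filter.Tendsto (fun a : ℝ => (2 * a) * ∫ y, (u y) ^ 2 * Real.exp (a * ‖y‖ ^ 2))
      (nhdsWithin (1 / 4) (Set.Iio (1 / 4))) (nhds ((1 / 2) * ∫ y, (u y) ^ 2 * Kw y)) := by
    refine Filter.Tendsto.mul ?_ ?_
    · refine (Continuous.tendsto' (by fun_prop) _ _ (by norm_num)).mono_left nhdsWithin_le_nhds
    · refine tendsto_integral_filter_of_dominated_convergence _ ?_ ?_ h0 ?_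
      · exact .of_forall fun a => by fun_prop
      · filter_upwards [self_mem_nhdsWithin] with a ha
        refine .of_forall fun y => ?_
        rw [Real.norm_of_nonneg (by positivity)]
        refine mul_le_mul_of_nonneg_left (Real.exp_le_exp.2 ?_) (sq_nonneg _)
        have : a < 1 / 4 := ha
        nlinarith [sq_nonneg ‖y‖]
      · refine .of_forall fun y => ?_
        refine (Continuous.tendsto' (by fun_prop) _ _ ?_).mono_left nhdsWithin_le_nhds
        simp only [Kw]; ring_nf
  refine le_of_tendsto ht ?_
  filter_upwards [Ioo_mem_nhdsLT (show (0 : ℝ) < 1 / 4 by norm_num)] with a ha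
  exact dir_ineq u D v hv hD hu h0 h1 a ha.2 ha.1

/-- weighted Poincaré inequality: for `n ≥ 3` and every
`u ∈ H¹(K)`, `(n/2) ∫ |u|² K dy ≤ ∫ |∇u|² K dy`. -/
theorem stmt2 (n : ℕ) (hn : 3 ≤ n) (u : EuclideanSpace ℝ (Fin n) → ℝ)
    (hu : MemH1K u) :
    ((n : ℝ) / 2) * ∫ y, (u y) ^ 2 * Kw y ≤ ∫ y, ‖gradient u y‖ ^ 2 * Kw y := by
  obtain ⟨hd, h0, h1⟩ := hu
  have hcoord : ∀ (i : Fin n) y,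
      gradient u y i = fderiv ℝ u y (EuclideanSpace.single i (1 : ℝ)) := fun i y => by
    have := InnerProductSpace.toDual_symm_apply (𝕜 := ℝ)
      (x := EuclideanSpace.single i (1 : ℝ)) (y := fderiv ℝ u y)
    rw [← this, EuclideanSpace.inner_single_right]
    simp [gradient]
  have hsq : ∀ y, ‖gradient u y‖ ^ 2 = ∑ i, (gradient u y i) ^ 2 := fun y => by
    rw [EuclideanSpace.norm_sq_eq]; simp
  have hKc : Continuous (Kw : EuclideanSpace ℝ (Fin n) → ℝ) := by
    unfold Kw; fun_prop
  have hKp : ∀ y : EuclideanSpace ℝ (Fin n), 0 < Kw y := fun y => Real.exp_pos _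
  have hi : ∀ i, Integrable (fun y => (gradient u y i) ^ 2 * Kw y) := fun i => by
    have hm : Measurable (fun y => gradient u y i) := by
      simp only [hcoord]; exact measurable_fderiv_apply_const ℝ u _
    refine h1.mono' ((hm.pow_const 2).mul hKc.measurable).aestronglyMeasurable
      (.of_forall fun y => ?_)
    rw [Real.norm_of_nonneg (mul_nonneg (sq_nonneg _) (hKp y).le), hsq]
    refine mul_le_mul_of_nonneg_right ?_ (hKp y).le
    exact Finset.single_le_sum (f := fun j => (gradient u y j) ^ 2)
      (fun j _ => sq_nonneg _) (Finset.mem_univ i)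
  have hsum : ∫ y, ‖gradient u y‖ ^ 2 * Kw y = ∑ i, ∫ y, (gradient u y i) ^ 2 * Kw y := by
    rw [← integral_finset_sum _ fun i _ => hi i]
    congr 1; ext y; rw [hsq, Finset.sum_mul]
  rw [hsum]
  calc ((n : ℝ) / 2) * ∫ y, (u y) ^ 2 * Kw y
      = ∑ _i : Fin n, (1 / 2) * ∫ y, (u y) ^ 2 * Kw y := by simp; ring
    _ ≤ _ := Finset.sum_le_sum fun i _ =>
      dir_ineq_lim u _ (EuclideanSpace.single i 1) (by simp) (hcoord i) hd h0 (hi i)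

end
end
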